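/- Let g ≥ 1 be an integer, N a positive even integer, and Π a symmetric g×g complex matrix whose imaginary part Π_I is positive definite. Then for all μ, ν ∈ {0,1,…,N−1}^g, (2N)^{g/2} (det Π_I)^{1/2} ∫_{[0,1]^{2g}} θ_μ^Π(x + Πy) · conj(θ_ν^Π(x + Πy)) · exp(−2πN y^T Π_I y) dx dy equals 1 if μ = ν and equals 0 if μ ≠ ν; i.e., the theta series are orthonormal with respect to the inner product ⟨⟨f,g⟩⟩ = (2N)^{g/2}(det Π_I)^{1/2} ∫_{[0,1]^{2g}} f(x+Πy) conj(g(x+Πy)) e^{−2πN y^T Π_I y} dx dy. -/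

import Mathlib

open scoped BigOperators

/-- The term of index `n ∈ ℤ^g` in the theta series `θ_μ^Π`:
`exp(2πiN[ (1/2)(μ/N+n)ᵀ Π (μ/N+n) + (μ/N+n)ᵀ z ])`. -/
noncomputable def thetaTerm (g N : ℕ) (P : Matrix (Fin g) (Fin g) ℂ) (μ : Fin g → ℤ)
    (z : Fin g → ℂ) (n : Fin g → ℤ) : ℂ :=
  Complex.exp (2 * Real.pi * Complex.I * N *
    ((1 / 2) * ∑ j, ∑ k, ((μ j : ℂ) / N + (n j : ℂ)) * P j k * ((μ k : ℂ) / N + (n k : ℂ))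
      + ∑ j, ((μ j : ℂ) / N + (n j : ℂ)) * z j))

/-- The theta series `θ_μ^Π(z) = Σ_{n ∈ ℤ^g} exp(2πiN[(1/2)(μ/N+n)ᵀΠ(μ/N+n) + (μ/N+n)ᵀz])`. -/
noncomputable def theta (g N : ℕ) (P : Matrix (Fin g) (Fin g) ℂ) (μ : Fin g → ℤ)
    (z : Fin g → ℂ) : ℂ :=
  ∑' n : Fin g → ℤ, thetaTerm g N P μ z n

open MeasureTheory

/-!
Splitting the weight `exp(−2πN yᵀΠ_I y)` evenly between the two factors, each weighted theta
series is a Fourier series in `x` whose frequencies are the vectors congruent to `μ` modulo `N`.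
The mode of frequency `k` has a coefficient of norm `exp(−πN (k/N + y)ᵀΠ_I(k/N + y))`.
Orthogonality of the modes leaves only the frequencies common to both series: there are none
unless `μ ≡ ν` modulo `N`, and otherwise translating the cube by the integer vectors `n` turns the
remaining sum into the Gaussian integral of `exp(−2πN vᵀΠ_I v)` over the whole space.
-/

/-- The unit cube `[0,1]^ι`, written as a product to match the domain of integration in the inner
product of theta series. -/
abbrev unitCube (ι : Type*) : Set (ι → ℝ) :=
  Set.univ.pi fun _ ↦ Set.Icc 0 1

section Cube

variable (ι : Type*) {E : Type*}

lemma isCompact_unitCube : IsCompact (unitCube ι) :=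
  isCompact_univ_pi fun _ ↦ isCompact_Icc

lemma measurableSet_unitCube [Countable ι] : MeasurableSet (unitCube ι) :=
  .univ_pi fun _ ↦ measurableSet_Icc

variable [Fintype ι]

lemma volume_real_unitCube : volume.real (unitCube ι) = 1 := by
  rw [Measure.real, volume_pi_pi]
  simp

variable {ι}

lemma setIntegral_mFourier_unitCube (k : ι → ℤ) :
    ∫ x in unitCube ι, UnitAddTorus.mFourier k (fun j ↦ (x j : UnitAddCircle)) =
      if k = 0 then 1 else 0 := by
  have h := orthonormal_iff_ite.mp (UnitAddTorus.orthonormal_mFourier (d := ι)) 0 k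
  simp only [ContinuousMap.inner_toLp, UnitAddTorus.mFourier_zero, ContinuousMap.one_apply,
    map_one, mul_one, UnitAddTorus.integral_preimage _ (0 : ι → ℝ), Pi.zero_apply, zero_add,
    eq_comm (a := (0 : ι → ℤ))] at h
  have hcube : {x : ι → ℝ | ∀ j, x j ∈ Set.Ioc (0 : ℝ) 1} =ᵐ[volume] unitCube ι := by
    have hpi := Measure.univ_pi_Ioc_ae_eq_Icc (μ := fun _ : ι ↦ (volume : Measure ℝ))
      (f := fun _ ↦ 0) (g := fun _ ↦ 1)
    rw [← Set.pi_univ_Icc] at hpi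
    simpa only [Set.pi, Set.mem_univ, forall_const] using! hpi
  rw [← setIntegral_congr_set hcube, h]

variable [NormedAddCommGroup E] [NormedSpace ℝ E]

lemma hasSum_setIntegral_unitCube_intCast_add {f : (ι → ℝ) → E} (hf : Integrable f) :
    HasSum (fun n : ι → ℤ ↦ ∫ y in unitCube ι, f (fun j ↦ n j + y j)) (∫ v, f v) := by
  let cell (n : ι → ℤ) : Set (ι → ℝ) := Set.univ.pi fun j ↦ Set.Ico (n j : ℝ) (n j + 1)
  have mem_cell (n : ι → ℤ) (v : ι → ℝ) : v ∈ cell n ↔ (fun j ↦ ⌊v j⌋) = n := by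
    simp [cell, funext_iff, Int.floor_eq_iff]
  have iUnion_cell : ⋃ n, cell n = Set.univ := by
    ext v
    simp [mem_cell]
  have disjoint_cell : Pairwise (Function.onFun Disjoint cell) := fun n m hnm ↦
    Set.disjoint_left.mpr fun v hn hm ↦
      hnm (((mem_cell n v).mp hn).symm.trans ((mem_cell m v).mp hm))
  have integral_cell (n : ι → ℤ) :
      ∫ v in cell n, f v = ∫ y in unitCube ι, f (fun j ↦ n j + y j) := by
    have hcell : cell n =ᵐ[volume] Set.Icc (fun j ↦ (n j : ℝ)) (fun j ↦ n j + 1) :=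
      Measure.univ_pi_Ico_ae_eq_Icc
    rw [setIntegral_congr_set hcell, ← (measurePreserving_add_left volume
      (fun j ↦ (n j : ℝ))).setIntegral_preimage_emb (measurableEmbedding_addLeft _)]
    congr 2
    ext y
    simp [Pi.le_def]
  have h := hasSum_integral_iUnion (μ := volume)
    (fun n ↦ MeasurableSet.univ_pi fun _ ↦ measurableSet_Ico) disjoint_cell hf.integrableOn
  rwa [iUnion_cell, setIntegral_univ, funext integral_cell] at h

end Cube

section Series

variable {α ι κ 𝕜 : Type*} [MeasurableSpace α] [Countable ι] [Countable κ] [RCLike 𝕜]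

lemma setIntegral_tsum_mul_conj_tsum {m : Measure α} {s : Set α} (hs : MeasurableSet s)
    (hms : m s ≠ ⊤) {F : ι → α → 𝕜} {G : κ → α → 𝕜} {B : ι → ℝ} {C : κ → ℝ}
    (hF : ∀ i, AEStronglyMeasurable (F i) (m.restrict s))
    (hG : ∀ j, AEStronglyMeasurable (G j) (m.restrict s))
    (hB : Summable B) (hC : Summable C)
    (hFB : ∀ i, ∀ a ∈ s, ‖F i a‖ ≤ B i) (hGC : ∀ j, ∀ a ∈ s, ‖G j a‖ ≤ C j) :
    ∫ a in s, (∑' i, F i a) * (starRingEnd 𝕜) (∑' j, G j a) ∂m =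
      ∑' p : ι × κ, ∫ a in s, F p.1 a * (starRingEnd 𝕜) (G p.2 a) ∂m := by
  have hBC : Summable fun p : ι × κ ↦ B p.1 * C p.2 := summable_mul_of_summable_norm hB.norm hC.norm
  have hbound (p : ι × κ) (a : α) (ha : a ∈ s) :
      ‖F p.1 a * (starRingEnd 𝕜) (G p.2 a)‖ ≤ B p.1 * C p.2 := by
    rw [norm_mul, RCLike.norm_conj]
    exact mul_le_mul (hFB _ a ha) (hGC _ a ha) (norm_nonneg _)
      ((norm_nonneg _).trans (hFB _ a ha))
  have hprod (a : α) (ha : a ∈ s) : HasSum (fun p : ι × κ ↦ F p.1 a * (starRingEnd 𝕜) (G p.2 a))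
      ((∑' i, F i a) * (starRingEnd 𝕜) (∑' j, G j a)) := by
    have hFa : Summable fun i ↦ ‖F i a‖ :=
      hB.of_nonneg_of_le (fun _ ↦ norm_nonneg _) (hFB · a ha)
    have hGa : Summable fun j ↦ ‖(starRingEnd 𝕜) (G j a)‖ :=
      hC.of_nonneg_of_le (fun _ ↦ norm_nonneg _) (by simpa using (hGC · a ha))
    rw [RCLike.conj_tsum, tsum_mul_tsum_of_summable_norm hFa hGa]
    exact (summable_mul_of_summable_norm hFa hGa).hasSum
  refine (hasSum_integral_of_dominated_convergence (fun p _ ↦ B p.1 * C p.2) (fun p ↦ ?_)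
    (fun p ↦ ?_) (.of_forall fun _ ↦ hBC) ?_ ?_).tsum_eq.symm
  · exact (hF _).mul (RCLike.continuous_conj.comp_aestronglyMeasurable (hG _))
  · exact ae_restrict_of_forall_mem hs (hbound p)
  · exact integrableOn_const hms
  · exact ae_restrict_of_forall_mem hs hprod

end Series

section Lattice

variable {ι E : Type*} [Fintype ι] [AddCommMonoid E] [TopologicalSpace E]

lemma tsum_ite_add_smul_eq_add_smul {N : ℕ} (hN : N ≠ 0) (μ ν : ι → ℤ) (f : (ι → ℤ) → E) :
    ∑' p : (ι → ℤ) × (ι → ℤ), (if μ + N • p.1 = ν + N • p.2 then f p.1 else 0) =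
      if ∀ j, μ j ≡ ν j [ZMOD N] then ∑' n, f n else 0 := by
  split_ifs with h
  · choose d hd using fun j ↦ (h j).symm.dvd
    have hμ : μ = ν + N • d := funext fun j ↦ by simpa using eq_add_of_sub_eq' (hd j)
    have heq (p : (ι → ℤ) × (ι → ℤ)) : μ + N • p.1 = ν + N • p.2 ↔ p.2 = p.1 + d := by
      rw [hμ, add_assoc, add_right_inj, ← smul_add, smul_right_inj hN, eq_comm, add_comm d]
    have hinj : Function.Injective fun n : ι → ℤ ↦ (n, n + d) := fun _ _ h ↦ congrArg Prod.fst h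
    rw [← hinj.tsum_eq]
    · exact tsum_congr fun n ↦ if_pos ((heq _).mpr rfl)
    · intro p hp
      have hp2 : p.2 = p.1 + d := (heq p).mp (of_not_not fun hne ↦ hp (if_neg hne))
      exact ⟨p.1, Prod.ext rfl hp2.symm⟩
  · have hne (p : (ι → ℤ) × (ι → ℤ)) : μ + N • p.1 ≠ ν + N • p.2 := by
      refine fun hp ↦ h fun j ↦ ?_
      have hj := congrArg (· % (N : ℤ)) (congrFun hp j)
      simpa [Int.ModEq] using hj
    simp only [if_neg (hne _), tsum_zero]

end Lattice

section Gaussian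

open scoped Matrix

variable {ι : Type*} [Fintype ι] {M : Matrix ι ι ℝ} {b : ℝ}

lemma dotProduct_mulVec_eq_sum {R : Type*} [Semiring R] (A : Matrix ι ι R) (v w : ι → R) :
    v ⬝ᵥ A *ᵥ w = ∑ j, ∑ k, v j * A j k * w k := by
  simp only [dotProduct, Matrix.mulVec, Finset.mul_sum, mul_assoc]

lemma integral_exp_neg_mul_dotProduct_mulVec [DecidableEq ι] (hM : M.PosDef) (b : ℝ) :
    ∫ v : ι → ℝ, Real.exp (-b * (v ⬝ᵥ M *ᵥ v)) =
      √(Real.pi / b) ^ Fintype.card ι / √M.det := by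
  obtain ⟨B, rfl⟩ : ∃ B : Matrix ι ι ℝ, M = star B * B := by
    open scoped MatrixOrder Matrix.Norms.L2Operator in
    exact CStarAlgebra.nonneg_iff_eq_star_mul_self.mp hM.posSemidef.nonneg
  have hdet : (star B * B).det = B.det ^ 2 := by
    rw [Matrix.det_mul, Matrix.star_eq_conjTranspose, Matrix.det_conjTranspose, star_trivial, sq]
  have hB : B.det ≠ 0 := fun h ↦ hM.det_pos.ne' (by rw [hdet, h, zero_pow two_ne_zero])
  have hquad (v : ι → ℝ) : v ⬝ᵥ (star B * B) *ᵥ v = ∑ j, (Matrix.toLin' B v j) ^ 2 := by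
    rw [← Matrix.mulVec_mulVec, Matrix.dotProduct_mulVec, Matrix.star_eq_conjTranspose,
      Matrix.conjTranspose_eq_transpose_of_trivial, Matrix.vecMul_transpose]
    simp only [dotProduct, Matrix.toLin'_apply, sq]
  calc ∫ v : ι → ℝ, Real.exp (-b * (v ⬝ᵥ (star B * B) *ᵥ v))
      = ∫ w, Real.exp (-b * ∑ j, w j ^ 2) ∂(Measure.map (Matrix.toLin' B) volume) := by
        rw [integral_map (LinearMap.continuous_on_pi _).aemeasurable
          (Continuous.aestronglyMeasurable (by fun_prop))]
        simp only [hquad]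
    _ = |B.det|⁻¹ * ∫ w : ι → ℝ, ∏ j, Real.exp (-b * w j ^ 2) := by
        rw [Real.map_matrix_volume_pi_eq_smul_volume_pi hB, integral_smul_measure,
          ENNReal.toReal_ofReal (abs_nonneg _), abs_inv, smul_eq_mul]
        simp only [Finset.mul_sum, Real.exp_sum]
    _ = √(Real.pi / b) ^ Fintype.card ι / √(star B * B).det := by
        rw [integral_fintype_prod_volume_eq_pow (fun t : ℝ ↦ Real.exp (-b * t ^ 2)),
          integral_gaussian, hdet, Real.sqrt_sq_eq_abs, inv_mul_eq_div]

lemma integrable_exp_neg_mul_dotProduct_mulVec (hM : M.PosDef) (hb : 0 < b) :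
    Integrable fun v : ι → ℝ ↦ Real.exp (-b * (v ⬝ᵥ M *ᵥ v)) := by
  classical
  refine Integrable.of_integral_ne_zero ?_
  rw [integral_exp_neg_mul_dotProduct_mulVec hM b]
  have := hM.det_pos
  have := Real.pi_pos
  positivity

lemma hasSum_setIntegral_unitCube_gaussian [DecidableEq ι] (hM : M.PosDef) (hb : 0 < b)
    (a : ι → ℝ) :
    HasSum (fun n : ι → ℤ ↦ ∫ y in unitCube ι,
        Real.exp (-b * ((fun j ↦ a j + n j + y j) ⬝ᵥ M *ᵥ fun j ↦ a j + n j + y j)))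
      (√(Real.pi / b) ^ Fintype.card ι / √M.det) := by
  have h := hasSum_setIntegral_unitCube_intCast_add
    ((integrable_exp_neg_mul_dotProduct_mulVec hM hb).comp_add_left a)
  rw [integral_add_left_eq_self (fun v : ι → ℝ ↦ Real.exp (-b * (v ⬝ᵥ M *ᵥ v))) a,
    integral_exp_neg_mul_dotProduct_mulVec hM] at h
  simpa only [Pi.add_def, add_assoc] using h

lemma dotProduct_mulVec_add_le_two_mul (hM : M.PosSemidef) (v w : ι → ℝ) :
    (v + w) ⬝ᵥ M *ᵥ (v + w) ≤ 2 * (v ⬝ᵥ M *ᵥ v) + 2 * (w ⬝ᵥ M *ᵥ w) := by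
  have hsub : 0 ≤ (v - w) ⬝ᵥ M *ᵥ (v - w) := hM.dotProduct_mulVec_nonneg (v - w)
  simp only [Matrix.mulVec_add, Matrix.mulVec_sub, add_dotProduct, sub_dotProduct, dotProduct_add,
    dotProduct_sub] at hsub ⊢
  linarith

/- Every value on the cube is controlled by the average over the cube of a wider Gaussian, and these
averages sum to a Gaussian integral. -/
lemma exists_summable_bound_gaussian (hM : M.PosDef) (hb : 0 < b) (a : ι → ℝ) :
    ∃ B : (ι → ℤ) → ℝ, Summable B ∧ ∀ n, ∀ y ∈ unitCube ι,
      Real.exp (-b * ((fun j ↦ a j + n j + y j) ⬝ᵥ M *ᵥ fun j ↦ a j + n j + y j)) ≤ B n := by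
  classical
  let q (v : ι → ℝ) : ℝ := v ⬝ᵥ M *ᵥ v
  have hq : Continuous q := by fun_prop
  obtain ⟨D, hD⟩ : ∃ D, ∀ p ∈ unitCube ι ×ˢ unitCube ι, q (p.1 - p.2) ≤ D := by
    have hK := (isCompact_unitCube ι).prod (isCompact_unitCube ι)
    simpa only [bddAbove_def, Set.forall_mem_image] using
      hK.bddAbove_image (f := fun p ↦ q (p.1 - p.2)) (by fun_prop)
  let wide (n : ι → ℤ) (y : ι → ℝ) : ℝ := Real.exp (-(b / 2) * q (fun j ↦ a j + n j + y j))
  refine ⟨fun n ↦ Real.exp (b * D) * ∫ y in unitCube ι, wide n y,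
    (hasSum_setIntegral_unitCube_gaussian hM (half_pos hb) a).summable.mul_left _,
    fun n y hy ↦ ?_⟩
  have hwide (y' : ι → ℝ) (hy' : y' ∈ unitCube ι) :
      Real.exp (-b * q (fun j ↦ a j + n j + y j)) ≤ Real.exp (b * D) * wide n y' := by
    have hshift : (fun j ↦ a j + n j + y j) + (y' - y) = fun j ↦ a j + n j + y' j := by
      ext j
      simp only [Pi.add_apply, Pi.sub_apply]
      ring
    have hquad : q (fun j ↦ a j + n j + y' j) ≤ 2 * q (fun j ↦ a j + n j + y j) + 2 * D := by
      have hpar := dotProduct_mulVec_add_le_two_mul hM.posSemidef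
        (fun j ↦ a j + n j + y j) (y' - y)
      rw [hshift] at hpar
      exact hpar.trans (by gcongr; exact hD (y', y) ⟨hy', hy⟩)
    rw [← Real.exp_add, Real.exp_le_exp]
    linarith [mul_le_mul_of_nonneg_left hquad (half_pos hb).le]
  calc Real.exp (-b * q (fun j ↦ a j + n j + y j))
      = ∫ _ in unitCube ι, Real.exp (-b * q (fun j ↦ a j + n j + y j)) := by
        rw [setIntegral_const, volume_real_unitCube, one_smul]
    _ ≤ ∫ y' in unitCube ι, Real.exp (b * D) * wide n y' :=
        setIntegral_mono_on (integrableOn_const (isCompact_unitCube ι).measure_ne_top)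
          (Continuous.continuousOn (by fun_prop) |>.integrableOn_compact (isCompact_unitCube ι))
          (measurableSet_unitCube ι) hwide
    _ = Real.exp (b * D) * ∫ y' in unitCube ι, wide n y' := integral_const_mul _ _

end Gaussian

section ThetaMode

variable {ι : Type*}

lemma add_nsmul_div {N : ℕ} (hN : N ≠ 0) (μ n : ι → ℤ) (j : ι) :
    ((μ + N • n) j : ℝ) / N = μ j / N + n j := by
  have hNR : (N : ℝ) ≠ 0 := Nat.cast_ne_zero.mpr hN
  rw [Pi.add_apply, Pi.smul_apply, nsmul_eq_mul, Int.cast_add, Int.cast_mul, Int.cast_natCast,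
    add_div, mul_div_cancel_left₀ _ hNR]

variable [Fintype ι]

lemma mFourier_coe_eq_exp (k : ι → ℤ) (x : ι → ℝ) :
    UnitAddTorus.mFourier k (fun j ↦ (x j : UnitAddCircle)) =
      Complex.exp (2 * Real.pi * Complex.I * ∑ j, (k j : ℂ) * (x j : ℂ)) := by
  simp only [UnitAddTorus.mFourier, ContinuousMap.coe_mk, fourier_coe_apply, Finset.mul_sum,
    Complex.exp_sum, Complex.ofReal_one, div_one, mul_assoc]

/-- The dependence on `y` of the exponential with characteristic `a` in a theta series evaluated at
`x + Πy`, multiplied by `exp(−πN yᵀΠ_I y)`. The latter is half of the weight in the inner product,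
so that the whole weight is shared equally between the two factors. -/
noncomputable def thetaCoeff (N : ℕ) (P : Matrix ι ι ℂ) (a y : ι → ℝ) : ℂ :=
  Complex.exp (Real.pi * N * (Complex.I * ∑ j, ∑ k, a j * P j k * (a k + 2 * y k) -
    ∑ j, ∑ k, y j * (P j k).im * y k))

/-- The Fourier mode of frequency `k` in `x` occurring in a weighted theta series of level `N`, as a
function of the pair `(x, y)`; its characteristic is `k / N`. -/
noncomputable def thetaMode (N : ℕ) (P : Matrix ι ι ℂ) (k : ι → ℤ) (z : (ι → ℝ) × (ι → ℝ)) : ℂ :=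
  UnitAddTorus.mFourier k (fun j ↦ (z.1 j : UnitAddCircle)) * thetaCoeff N P (fun j ↦ k j / N) z.2

/-- The function `(x, y) ↦ θ_μ^Π(x + Πy) exp(−πN yᵀΠ_I y)`, expanded in the modes whose frequency is
congruent to `μ` modulo `N`. -/
noncomputable def weightedTheta (N : ℕ) (P : Matrix ι ι ℂ) (μ : ι → ℤ)
    (z : (ι → ℝ) × (ι → ℝ)) : ℂ :=
  ∑' n : ι → ℤ, thetaMode N P (μ + N • n) z

variable {N : ℕ} {P : Matrix ι ι ℂ}

lemma continuous_thetaCoeff (N : ℕ) (P : Matrix ι ι ℂ) (a : ι → ℝ) :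
    Continuous (thetaCoeff N P a) := by
  unfold thetaCoeff
  fun_prop

lemma continuous_thetaMode (N : ℕ) (P : Matrix ι ι ℂ) (k : ι → ℤ) :
    Continuous (thetaMode N P k) :=
  ((UnitAddTorus.mFourier k).continuous.comp (by fun_prop)).mul
    ((continuous_thetaCoeff N P _).comp continuous_snd)

lemma norm_thetaCoeff (N : ℕ) (hP : (P.map Complex.im).IsSymm) (a y : ι → ℝ) :
    ‖thetaCoeff N P a y‖ = Real.exp (-(Real.pi * N) *
      ((fun j ↦ a j + y j) ⬝ᵥ (P.map Complex.im).mulVec fun j ↦ a j + y j)) := by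
  have hre : (Real.pi * N * (Complex.I * ∑ j, ∑ k, a j * P j k * (a k + 2 * y k) -
      ∑ j, ∑ k, y j * (P j k).im * y k) : ℂ).re = -(Real.pi * N) *
        (∑ j, ∑ k, a j * (P j k).im * (a k + 2 * y k) + ∑ j, ∑ k, y j * (P j k).im * y k) := by
    rw [← Complex.ofReal_natCast, ← Complex.ofReal_mul, Complex.re_ofReal_mul]
    simp only [Complex.ofReal_sum, Complex.ofReal_mul, Complex.sub_re, Complex.mul_re,
      Complex.I_re, Complex.re_sum, Complex.ofReal_re, Complex.ofReal_im, Complex.add_re,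
      Complex.re_ofNat, Complex.im_ofNat, Complex.mul_im, Complex.add_im, Complex.I_im,
      Complex.im_sum, zero_mul, mul_zero, sub_zero, add_zero, zero_add, one_mul, zero_sub, neg_mul]
    ring
  have hsymm : ∑ j, ∑ k, y j * (P j k).im * a k = ∑ j, ∑ k, a j * (P j k).im * y k := by
    rw [Finset.sum_comm]
    refine Finset.sum_congr rfl fun j _ ↦ Finset.sum_congr rfl fun k _ ↦ ?_
    have : (P k j).im = (P j k).im := hP.apply j k
    rw [this]
    ring
  rw [thetaCoeff, Complex.norm_exp, hre, dotProduct_mulVec_eq_sum]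
  congr 2
  simp only [Matrix.map_apply, mul_add, add_mul, Finset.sum_add_distrib, hsymm,
    mul_left_comm _ (2 : ℝ), ← Finset.mul_sum]
  ring

lemma norm_thetaMode (N : ℕ) (P : Matrix ι ι ℂ) (k : ι → ℤ) (z : (ι → ℝ) × (ι → ℝ)) :
    ‖thetaMode N P k z‖ = ‖thetaCoeff N P (fun j ↦ k j / N) z.2‖ := by
  have hnorm : ‖UnitAddTorus.mFourier k (fun j ↦ (z.1 j : UnitAddCircle))‖ = 1 := by
    simp only [UnitAddTorus.mFourier, ContinuousMap.coe_mk, fourier_apply, norm_prod,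
      Circle.norm_coe, Finset.prod_const_one]
  rw [thetaMode, norm_mul, hnorm, one_mul]

lemma exists_summable_bound_thetaMode (hN : N ≠ 0) (hP : (P.map Complex.im).PosDef) (μ : ι → ℤ) :
    ∃ B : (ι → ℤ) → ℝ, Summable B ∧
      ∀ n, ∀ z ∈ unitCube ι ×ˢ unitCube ι, ‖thetaMode N P (μ + N • n) z‖ ≤ B n := by
  have hb : 0 < Real.pi * N := by positivity
  obtain ⟨B, hB, hbound⟩ := exists_summable_bound_gaussian hP hb fun j ↦ (μ j : ℝ) / N
  refine ⟨B, hB, fun n z hz ↦ ?_⟩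
  simp only [norm_thetaMode, norm_thetaCoeff N hP.isHermitian, add_nsmul_div hN]
  exact hbound n z.2 hz.2

lemma continuousOn_weightedTheta (hN : N ≠ 0) (hP : (P.map Complex.im).PosDef) (μ : ι → ℤ) :
    ContinuousOn (weightedTheta N P μ) (unitCube ι ×ˢ unitCube ι) := by
  obtain ⟨B, hB, hbound⟩ := exists_summable_bound_thetaMode hN hP μ
  exact continuousOn_tsum (fun n ↦ (continuous_thetaMode N P _).continuousOn) hB hbound

lemma integrableOn_weightedTheta_mul_conj (hN : N ≠ 0) (hP : (P.map Complex.im).PosDef)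
    (μ ν : ι → ℤ) :
    IntegrableOn (fun z ↦ weightedTheta N P μ z * (starRingEnd ℂ) (weightedTheta N P ν z))
      (unitCube ι ×ˢ unitCube ι) :=
  ((continuousOn_weightedTheta hN hP μ).mul
    (Complex.continuous_conj.comp_continuousOn (continuousOn_weightedTheta hN hP ν))
    ).integrableOn_compact ((isCompact_unitCube ι).prod (isCompact_unitCube ι))

lemma setIntegral_thetaMode_mul_conj (hP : (P.map Complex.im).IsSymm) (k l : ι → ℤ) :
    ∫ z in unitCube ι ×ˢ unitCube ι, thetaMode N P k z * (starRingEnd ℂ) (thetaMode N P l z) =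
      if k = l then ((∫ y in unitCube ι, Real.exp (-(2 * (Real.pi * N)) *
        ((fun j ↦ k j / N + y j) ⬝ᵥ (P.map Complex.im).mulVec fun j ↦ k j / N + y j)) : ℝ) : ℂ)
      else 0 := by
  have hsep (z : (ι → ℝ) × (ι → ℝ)) : thetaMode N P k z * (starRingEnd ℂ) (thetaMode N P l z) =
      UnitAddTorus.mFourier (k - l) (fun j ↦ (z.1 j : UnitAddCircle)) *
        (thetaCoeff N P (fun j ↦ k j / N) z.2 *
          (starRingEnd ℂ) (thetaCoeff N P (fun j ↦ l j / N) z.2)) := by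
    rw [thetaMode, thetaMode, map_mul, sub_eq_add_neg, UnitAddTorus.mFourier_add,
      UnitAddTorus.mFourier_neg]
    ring
  simp only [hsep]
  rw [Measure.volume_eq_prod, setIntegral_prod_mul
    (fun x : ι → ℝ ↦ UnitAddTorus.mFourier (k - l) (fun j ↦ (x j : UnitAddCircle)))
    (fun y ↦ thetaCoeff N P (fun j ↦ k j / N) y *
      (starRingEnd ℂ) (thetaCoeff N P (fun j ↦ l j / N) y)), setIntegral_mFourier_unitCube]
  simp only [sub_eq_zero, ite_mul, one_mul, zero_mul]
  split_ifs with hkl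
  · subst hkl
    rw [← integral_complex_ofReal]
    refine integral_congr_ae (.of_forall fun y ↦ ?_)
    dsimp only
    rw [Complex.mul_conj', norm_thetaCoeff N hP, ← Complex.ofReal_pow, ← Real.exp_nat_mul]
    congr 2
    push_cast
    ring
  · rfl

lemma setIntegral_weightedTheta_mul_conj [DecidableEq ι] (hN : N ≠ 0)
    (hP : (P.map Complex.im).PosDef) (μ ν : ι → ℤ) [Decidable (∀ j, μ j ≡ ν j [ZMOD N])] :
    ∫ z in unitCube ι ×ˢ unitCube ι,
        weightedTheta N P μ z * (starRingEnd ℂ) (weightedTheta N P ν z) =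
      if ∀ j, μ j ≡ ν j [ZMOD N] then
        ((√(2 * N : ℝ)⁻¹ ^ Fintype.card ι / √(P.map Complex.im).det : ℝ) : ℂ) else 0 := by
  obtain ⟨B, hB, hμB⟩ := exists_summable_bound_thetaMode hN hP μ
  obtain ⟨C, hC, hνC⟩ := exists_summable_bound_thetaMode hN hP ν
  have hK := (isCompact_unitCube ι).prod (isCompact_unitCube ι)
  have hgauss := hasSum_setIntegral_unitCube_gaussian hP
    (b := 2 * (Real.pi * N)) (by positivity) fun j ↦ (μ j : ℝ) / N
  have hvar : Real.pi / (2 * (Real.pi * N)) = (2 * N : ℝ)⁻¹ := by field_simp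
  simp only [weightedTheta]
  rw [setIntegral_tsum_mul_conj_tsum hK.measurableSet hK.measure_ne_top
    (fun n ↦ (continuous_thetaMode N P _).aestronglyMeasurable)
    (fun n ↦ (continuous_thetaMode N P _).aestronglyMeasurable) hB hC hμB hνC]
  simp only [setIntegral_thetaMode_mul_conj hP.isHermitian]
  rw [tsum_ite_add_smul_eq_add_smul hN μ ν (fun n ↦ ((∫ y in unitCube ι,
    Real.exp (-(2 * (Real.pi * N)) * ((fun j ↦ ((μ + N • n) j : ℝ) / N + y j) ⬝ᵥ
      (P.map Complex.im).mulVec fun j ↦ ((μ + N • n) j : ℝ) / N + y j)) : ℝ) : ℂ)),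
    ← Complex.ofReal_tsum]
  simp only [add_nsmul_div hN]
  rw [hgauss.tsum_eq, hvar]

end ThetaMode

section Theta

variable {g N : ℕ}

lemma thetaTerm_mul_exp_eq_thetaMode (hN : N ≠ 0) (P : Matrix (Fin g) (Fin g) ℂ)
    (μ n : Fin g → ℤ) (x y : Fin g → ℝ) :
    thetaTerm g N P μ (fun j ↦ (x j : ℂ) + ∑ k, P j k * (y k : ℂ)) n *
        (Real.exp (-(Real.pi * N) * ∑ j, ∑ k, y j * (P j k).im * y k) : ℂ) =
      thetaMode N P (μ + N • n) (x, y) := by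
  obtain ⟨a, ha⟩ : ∃ a : Fin g → ℝ, ∀ j, (μ j : ℝ) / N + n j = a j := ⟨_, fun _ ↦ rfl⟩
  have haC (j : Fin g) : (μ j : ℂ) / N + n j = a j := mod_cast congrArg Complex.ofReal (ha j)
  have hfreq (j : Fin g) : (((μ + N • n) j : ℤ) : ℂ) = N * a j := by
    have hNR : (N : ℝ) ≠ 0 := Nat.cast_ne_zero.mpr hN
    have := (div_eq_iff hNR).mp ((add_nsmul_div hN μ n j).trans (ha j))
    rw [mul_comm]
    exact_mod_cast this
  have hlinear : ∑ j, (a j : ℂ) * (x j + ∑ k, P j k * y k) =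
      ∑ j, (a j : ℂ) * x j + ∑ j, ∑ k, a j * P j k * y k := by
    simp only [mul_add, Finset.sum_add_distrib, Finset.mul_sum, mul_assoc]
  have hquad : ∑ j, ∑ k, (a j : ℂ) * P j k * (a k + 2 * y k) =
      ∑ j, ∑ k, a j * P j k * a k + 2 * ∑ j, ∑ k, a j * P j k * y k := by
    simp only [mul_add, Finset.sum_add_distrib, Finset.mul_sum, mul_left_comm _ (2 : ℂ)]
  simp only [thetaMode, mFourier_coe_eq_exp, thetaCoeff, thetaTerm, haC, hfreq, add_nsmul_div hN,
    ha, hlinear, hquad, Complex.ofReal_exp, ← Complex.exp_add, mul_assoc (N : ℂ), ← Finset.mul_sum]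
  congr 1
  push_cast
  ring

lemma theta_mul_exp_eq_weightedTheta (hN : N ≠ 0) (P : Matrix (Fin g) (Fin g) ℂ)
    (μ : Fin g → ℤ) (x y : Fin g → ℝ) :
    theta g N P μ (fun j ↦ (x j : ℂ) + ∑ k, P j k * (y k : ℂ)) *
        (Real.exp (-(Real.pi * N) * ∑ j, ∑ k, y j * (P j k).im * y k) : ℂ) =
      weightedTheta N P μ (x, y) := by
  rw [theta, weightedTheta, ← tsum_mul_right]
  exact tsum_congr fun n ↦ thetaTerm_mul_exp_eq_thetaMode hN P μ n x y

lemma theta_mul_conj_theta_mul_exp (hN : N ≠ 0) (P : Matrix (Fin g) (Fin g) ℂ)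
    (μ ν : Fin g → ℤ) (x y : Fin g → ℝ) :
    theta g N P μ (fun j ↦ (x j : ℂ) + ∑ k, P j k * (y k : ℂ)) *
        (starRingEnd ℂ) (theta g N P ν (fun j ↦ (x j : ℂ) + ∑ k, P j k * (y k : ℂ))) *
        (Real.exp (-(2 * Real.pi * N) * ∑ j, ∑ k, y j * (P j k).im * y k) : ℂ) =
      weightedTheta N P μ (x, y) * (starRingEnd ℂ) (weightedTheta N P ν (x, y)) := by
  rw [← theta_mul_exp_eq_weightedTheta hN, ← theta_mul_exp_eq_weightedTheta hN, map_mul,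
    Complex.conj_ofReal, mul_mul_mul_comm, ← Complex.ofReal_mul, ← Real.exp_add]
  congr 3
  ring

end Theta

theorem theta_orthonormal_general (g N : ℕ) (hN : 0 < N) (P : Matrix (Fin g) (Fin g) ℂ)
    (hpos : (P.map Complex.im).PosDef) (μ ν : Fin g → ℤ) :
    (((2 * (N : ℝ)) ^ ((g : ℝ) / 2) * Real.sqrt ((P.map Complex.im).det) : ℝ) : ℂ) *
      ∫ x in Set.univ.pi fun _ : Fin g => Set.Icc (0 : ℝ) 1,
        ∫ y in Set.univ.pi fun _ : Fin g => Set.Icc (0 : ℝ) 1,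
          theta g N P μ (fun j => (x j : ℂ) + ∑ k, P j k * (y k : ℂ)) *
            (starRingEnd ℂ) (theta g N P ν (fun j => (x j : ℂ) + ∑ k, P j k * (y k : ℂ))) *
            (Real.exp (-(2 * Real.pi * N) * ∑ j, ∑ k, y j * (P j k).im * y k) : ℂ)
      = if ∀ j, μ j ≡ ν j [ZMOD N] then 1 else 0 := by
  have hN0 := hN.ne'
  have hdet : √(P.map Complex.im).det ≠ 0 := (Real.sqrt_pos.mpr hpos.det_pos).ne'
  have hnormalization : (2 * (N : ℝ)) ^ ((g : ℝ) / 2) * √(P.map Complex.im).det *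
      (√(2 * N : ℝ)⁻¹ ^ g / √(P.map Complex.im).det) = 1 := by
    rw [Real.rpow_div_two_eq_sqrt _ (by positivity), Real.rpow_natCast, Real.sqrt_inv, inv_pow]
    field_simp
  simp only [theta_mul_conj_theta_mul_exp hN0]
  rw [← setIntegral_prod _ (integrableOn_weightedTheta_mul_conj hN0 hpos μ ν),
    ← Measure.volume_eq_prod, setIntegral_weightedTheta_mul_conj hN0 hpos, Fintype.card_fin,
    mul_ite, mul_zero, ← Complex.ofReal_mul, hnormalization, Complex.ofReal_one]

/-- Orthonormality of the theta series with respect to the inner product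
`⟨⟨f,h⟩⟩ = (2N)^{g/2}(det Π_I)^{1/2} ∫_{[0,1]^{2g}} f(x+Πy) conj(h(x+Πy)) e^{−2πN yᵀΠ_I y} dx dy`. -/
theorem theta_orthonormal (g N : ℕ) (hg : 1 ≤ g) (hN0 : 0 < N) (hN : Even N)
    (P : Matrix (Fin g) (Fin g) ℂ) (hsym : P.IsSymm)
    (hpos : (P.map Complex.im).PosDef)
    (μ ν : Fin g → ℤ) (hμ : ∀ j, 0 ≤ μ j ∧ μ j < N) (hν : ∀ j, 0 ≤ ν j ∧ ν j < N) :
    (((2 * (N : ℝ)) ^ ((g : ℝ) / 2) * Real.sqrt ((P.map Complex.im).det) : ℝ) : ℂ) *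
      ∫ x in Set.univ.pi fun _ : Fin g => Set.Icc (0 : ℝ) 1,
        ∫ y in Set.univ.pi fun _ : Fin g => Set.Icc (0 : ℝ) 1,
          theta g N P μ (fun j => (x j : ℂ) + ∑ k, P j k * (y k : ℂ)) *
            (starRingEnd ℂ) (theta g N P ν (fun j => (x j : ℂ) + ∑ k, P j k * (y k : ℂ))) *
            (Real.exp (-(2 * Real.pi * N) * ∑ j, ∑ k, y j * (P j k).im * y k) : ℂ)
      = if μ = ν then 1 else 0 := by
  have hcongr : (∀ j, μ j ≡ ν j [ZMOD N]) ↔ μ = ν := by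
    rw [funext_iff]
    refine forall_congr' fun j ↦ ?_
    rw [Int.ModEq, Int.emod_eq_of_lt (hμ j).1 (hμ j).2, Int.emod_eq_of_lt (hν j).1 (hν j).2]
  simpa only [hcongr] using theta_orthonormal_general g N hN0 P hpos μ ν
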